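/- The Nijenhuis bracket satisfies the graded Jacobi identity: for any A ∈ C^a(V), B ∈ C^b(V), C ∈ C^c(V), one has [A,[B,C]] = [[A,B],C] + (−1)^{(a−1)(b−1)} [B,[A,C]]. Hence ⊕_n C^n(V), with A ∈ C^a(V) assigned degree a−1 (and parity a−1 mod 2), is a graded Lie (super)algebra under the Nijenhuis bracket. -/

import Mathlib

/-!
Nijenhuis bracket on alternating multilinear cochains `C^n(V)` of an `R`-module `V`.

We encode an `n`-ary map `(Fin n → V) → V` as a map `(ℕ → V) → V` (depending only on the
first `n` coordinates) via `ext`, so that the insertion product and the Nijenhuis bracket,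
whose output arities involve `ℕ`-subtraction, can be stated uniformly.
-/

/-- Extend an `n`-ary map on `V` to a map on sequences, reading the first `n` coordinates. -/
def ext {V : Type*} {n : ℕ} (f : (Fin n → V) → V) : (ℕ → V) → V :=
  fun x => f fun i => x i

/-- The insertion product `A∘B` of an `a`-ary map `f` and a `b`-ary map `g`
(encoded as maps on sequences):
`(A∘B)(x_1,…,x_{a+b−1}) = Σ_σ sgn(σ) A(B(x_{σ(1)},…,x_{σ(b)}), x_{σ(b+1)},…,x_{σ(a+b−1)})`,
the sum running over all permutations `σ` of `{1,…,a+b−1}` increasing on the first `b` and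
on the last `a-1` positions; it is `0` when `a = 0`. -/
noncomputable def ins {V : Type*} [AddCommGroup V] (a b : ℕ) (f g : (ℕ → V) → V) :
    (ℕ → V) → V := fun x =>
  if hA : a = 0 then 0
  else
    ∑ σ ∈ Finset.univ.filter (fun σ : Equiv.Perm (Fin (a + b - 1)) =>
        (∀ i j : Fin (a + b - 1), i < j → (j : ℕ) < b → σ i < σ j) ∧
        (∀ i j : Fin (a + b - 1), i < j → b ≤ (i : ℕ) → σ i < σ j)),
      (Equiv.Perm.sign σ : ℤ) •
        f (fun i : ℕ =>
          if i = 0 then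
            g (fun k : ℕ =>
              if hk : k < b then x ((σ ⟨k, by omega⟩ : Fin (a + b - 1)) : ℕ) else 0)
          else if hi : b + i - 1 < a + b - 1 then
            x ((σ ⟨b + i - 1, hi⟩ : Fin (a + b - 1)) : ℕ)
          else 0)

/-- The Nijenhuis bracket `[A,B] := A∘B − (−1)^{(a−1)(b−1)} B∘A`. -/
noncomputable def nij {V : Type*} [AddCommGroup V] (a b : ℕ) (f g : (ℕ → V) → V) :
    (ℕ → V) → V := fun x =>
  ins a b f g x - (Int.negOnePow (((a : ℤ) - 1) * ((b : ℤ) - 1)) : ℤ) • ins b a g f x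

/-!
Let `ι_v F` be the contraction of a cochain `F` of any arity with `v` in the first argument, and
`ε` the sign `(-1) ^ (n - 1)` on arity `n`. In a shuffle the first argument goes either into
the first slot of `G` or into the first free slot of `F` after `G`, hence
`ι_v (F ∘ G) = F ∘ ι_v G + ι_v F ∘ ε G`, and this recursion determines `∘`. By it, `ι_v` acts on the
associator `(F ∘ G) ∘ H - F ∘ (G ∘ H)` as a signed derivation, so induction on the number of
arguments shows that the associator is graded symmetric in `G` and `H`: insertion is a graded
pre-Lie product, and the graded commutator of such a product satisfies the graded Jacobi identity.
-/

/-! ### Shuffles and the position of their value `0` -/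

section Shuffle

open Equiv (Perm)

/-- `σ` is a `(b, n - b)`-shuffle: it is increasing on the positions `< b` and on the
positions `≥ b`. -/
abbrev IsShuffle {n : ℕ} (b : ℕ) (σ : Perm (Fin n)) : Prop :=
  (∀ i j : Fin n, i < j → (j : ℕ) < b → σ i < σ j) ∧
    ∀ i j : Fin n, i < j → b ≤ (i : ℕ) → σ i < σ j

/-- The permutation whose sequence of values is that of `e`, shifted up by one, with the value `0`
inserted at position `p`. -/
def insertZero {n : ℕ} (p : Fin (n + 1)) (e : Perm (Fin n)) : Perm (Fin (n + 1)) :=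
  Perm.decomposeFin.symm (0, e) * p.cycleRange

variable {n : ℕ} (p : Fin (n + 1)) (e : Perm (Fin n))

@[simp]
theorem insertZero_self : insertZero p e p = 0 := by
  simp [insertZero]

@[simp]
theorem insertZero_succAbove (j : Fin n) : insertZero p e (p.succAbove j) = (e j).succ := by
  simp [insertZero, Fin.cycleRange_succAbove]

theorem sign_insertZero :
    (Perm.sign (insertZero p e) : ℤ) = (-1) ^ (p : ℕ) * (Perm.sign e : ℤ) := by
  simp [insertZero, Fin.sign_cycleRange, mul_comm]

theorem insertZero_bijective :
    Function.Bijective fun pe : Fin (n + 1) × Perm (Fin n) ↦ insertZero pe.1 pe.2 := by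
  refine (Fintype.bijective_iff_injective_and_card _).mpr
    ⟨fun ⟨p, e⟩ ⟨p', e'⟩ h ↦ ?_, by simp [Fintype.card_perm, Nat.factorial_succ]⟩
  replace h : insertZero p e = insertZero p' e' := h
  obtain rfl : p = p' := (insertZero p e).injective <| by rw [insertZero_self, h, insertZero_self]
  have he (j : Fin n) : e j = e' j := Fin.succ_injective n <| by
    rw [← insertZero_succAbove p, ← insertZero_succAbove p, h]
  rw [Equiv.ext he]

theorem val_succAbove_eq_ite (j : Fin n) :
    (p.succAbove j : ℕ) = if (j : ℕ) < p then (j : ℕ) else j + 1 := by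
  simp only [Fin.succAbove, Fin.lt_def, Fin.val_castSucc]
  split_ifs <;> simp

theorem ofFn_comp_insertZero {α : Type*} (x : Fin (n + 1) → α) :
    List.ofFn (x ∘ insertZero p e) = (List.ofFn (Fin.tail x ∘ e)).insertIdx p (x 0) := by
  refine List.ext_getElem (by grind) fun i h _ ↦ ?_
  rw [List.getElem_ofFn, Function.comp_apply, List.getElem_insertIdx]
  obtain hp | ⟨j, hj⟩ := p.eq_self_or_eq_succAbove ⟨i, by simpa using h⟩
  · simp [show i = p from congrArg Fin.val hp]
  · have hij := (congrArg Fin.val hj).trans (val_succAbove_eq_ite p j)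
    rw [hj, insertZero_succAbove]
    dsimp only at hij
    grind [Fin.tail]

theorem eq_zero_or_eq_iff_forall_succAbove (b : ℕ) :
    ((p : ℕ) = 0 ∨ (p : ℕ) = b) ↔
      (∀ i, p.succAbove i < p → ¬(p : ℕ) < b) ∧
        ∀ i, p.succAbove i < p → ¬b ≤ (p.succAbove i : ℕ) := by
  refine ⟨by grind, fun ⟨h₁, h₂⟩ ↦ ?_⟩
  have hmem (k : ℕ) (hk : k < p) : ∃ i : Fin n, (p.succAbove i : ℕ) = k :=
    ⟨⟨k, by lia⟩, by simp [val_succAbove_eq_ite, hk]⟩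
  by_contra! h
  obtain hpb | hbp := h.2.lt_or_gt
  · obtain ⟨i, hi⟩ := hmem 0 (by lia)
    exact h₁ i (Fin.lt_def.mpr (by lia)) hpb
  · obtain ⟨i, hi⟩ := hmem b hbp
    exact h₂ i (Fin.lt_def.mpr (by lia)) (by lia)

theorem isShuffle_insertZero_iff_succAbove (b : ℕ) :
    IsShuffle b (insertZero p e) ↔ ((p : ℕ) = 0 ∨ (p : ℕ) = b) ∧
      (∀ i j, i < j → (p.succAbove j : ℕ) < b → e i < e j) ∧
        ∀ i j, i < j → b ≤ (p.succAbove i : ℕ) → e i < e j := by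
  simp only [IsShuffle, p.forall_iff_succAbove, insertZero_self, insertZero_succAbove,
    eq_zero_or_eq_iff_forall_succAbove]
  simp only [lt_self_iff_false, imp_false, not_lt, IsEmpty.forall_iff, Fin.succ_pos,
    implies_true, and_self, not_lt_zero, Fin.succAbove_lt_succAbove_iff, Fin.succ_lt_succ_iff,
    true_and, not_le]
  grind

theorem isShuffle_insertZero_iff (b : ℕ) :
    IsShuffle b (insertZero p e) ↔
      ((p : ℕ) = 0 ∧ b ≠ 0 ∧ IsShuffle (b - 1) e) ∨ ((p : ℕ) = b ∧ IsShuffle b e) := by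
  rw [isShuffle_insertZero_iff_succAbove]
  rcases eq_or_ne (p : ℕ) b with rfl | hb
  · have hlt (j : Fin n) : (p.succAbove j : ℕ) < p ↔ (j : ℕ) < p := by
      grind [val_succAbove_eq_ite]
    simp only [← not_lt, hlt]
    grind
  · rcases eq_or_ne (p : ℕ) 0 with hp | hp
    · have hlt (j : Fin n) : (p.succAbove j : ℕ) < b ↔ (j : ℕ) < b - 1 := by
        grind [val_succAbove_eq_ite]
      simp only [← not_lt, hlt]
      grind
    · simp [hp, hb]

variable {α W : Type*} [AddCommGroup W]

/-- The sum of the values of `Φ` at the signed `(b, n - b)`-shuffles of the sequence `x`. -/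
def shuffleSum (b : ℕ) (Φ : List α → W) (x : Fin n → α) : W :=
  ∑ σ : Perm (Fin n) with IsShuffle b σ, (Perm.sign σ : ℤ) • Φ (List.ofFn (x ∘ σ))

theorem shuffleSum_congr {b : ℕ} {Φ Ψ : List α → W} (h : ∀ l, l.length = n → Φ l = Ψ l)
    (x : Fin n → α) : shuffleSum b Φ x = shuffleSum b Ψ x :=
  Finset.sum_congr rfl fun _ _ ↦ by rw [h _ List.length_ofFn]

theorem shuffleSum_succ (b : ℕ) (Φ : List α → W) (x : Fin (n + 1) → α) :
    shuffleSum b Φ x =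
      (if b = 0 then 0 else shuffleSum (b - 1) (fun l ↦ Φ (x 0 :: l)) (Fin.tail x)) +
      if b ≤ n then (-1 : ℤ) ^ b • shuffleSum b (fun l ↦ Φ (l.insertIdx b (x 0))) (Fin.tail x)
      else 0 := by
  have hsum : shuffleSum b Φ x = ∑ p : Fin (n + 1), ∑ e : Perm (Fin n),
      if IsShuffle b (insertZero p e) then ((-1) ^ (p : ℕ) * (Perm.sign e : ℤ)) •
        Φ ((List.ofFn (Fin.tail x ∘ e)).insertIdx p (x 0)) else 0 := by
    rw [shuffleSum, Finset.sum_filter, ← insertZero_bijective.sum_comp,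
      Fintype.sum_prod_type]
    simp only [ofFn_comp_insertZero, sign_insertZero]
  have hp (p : Fin (n + 1)) : (∑ e : Perm (Fin n),
      if IsShuffle b (insertZero p e) then ((-1) ^ (p : ℕ) * (Perm.sign e : ℤ)) •
        Φ ((List.ofFn (Fin.tail x ∘ e)).insertIdx p (x 0)) else 0) =
      (if p = 0 then
        if b = 0 then 0 else shuffleSum (b - 1) (fun l ↦ Φ (x 0 :: l)) (Fin.tail x) else 0) +
      if (p : ℕ) = b then
        (-1 : ℤ) ^ b • shuffleSum b (fun l ↦ Φ (l.insertIdx b (x 0))) (Fin.tail x) else 0 := by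
    simp only [isShuffle_insertZero_iff, shuffleSum, Finset.sum_filter, Finset.smul_sum]
    rcases eq_or_ne p 0 with rfl | hp
    · rcases eq_or_ne b 0 with rfl | hb
      · simp
      · simp [hb, hb.symm]
    · rcases eq_or_ne (p : ℕ) b with rfl | hb
      · simp [hp, mul_smul]
      · simp [hp, hb]
  simp only [hsum, hp, Finset.sum_add_distrib, Finset.sum_ite_eq', Finset.mem_univ, if_true]
  congr 1
  split_ifs with hb
  · simp [← Fin.ext_iff (b := ⟨b, Nat.lt_succ_of_le hb⟩)]
  · exact Finset.sum_eq_zero fun p _ ↦ if_neg (by lia)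

theorem shuffleSum_neg (b : ℕ) (Φ : List α → W) (x : Fin n → α) :
    shuffleSum b (fun l ↦ -Φ l) x = -shuffleSum b Φ x := by
  simp only [shuffleSum, smul_neg, Finset.sum_neg_distrib]

end Shuffle

/-! ### Skew-symmetric cochains and the graded pre-Lie identity -/

/-- Skew-symmetry of a multilinear map under transpositions of its arguments; it is weaker than
being alternating when `V` has `2`-torsion. -/
def IsSkewSymmetric {R V W : Type*} [Semiring R] [AddCommGroup V] [Module R V]
    [AddCommGroup W] [Module R W] {n : ℕ} (A : MultilinearMap R (fun _ : Fin n ↦ V) W) : Prop :=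
  ∀ (x : Fin n → V) (i j : Fin n), i ≠ j → A (x ∘ Equiv.swap i j) = -A x

/-- The skew-symmetric multiadditive cochains of all arities on `V`, as functions of the list of
arguments; the restriction to lists of length `n` is the component of arity `n`. -/
def skewCochains (V : Type*) [AddCommGroup V] : AddSubgroup (List V → V) where
  carrier := {F | (∀ l u v m, F (l ++ (u + v) :: m) = F (l ++ u :: m) + F (l ++ v :: m)) ∧
    ∀ l u v m, F (l ++ u :: v :: m) = -F (l ++ v :: u :: m)}
  zero_mem' := by simp
  add_mem' := by
    rintro F G ⟨hF, hF'⟩ ⟨hG, hG'⟩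
    refine ⟨fun l u v m ↦ ?_, fun l u v m ↦ ?_⟩
    · simp only [Pi.add_apply, hF, hG]
      abel
    · rw [Pi.add_apply, Pi.add_apply, hF', hG', neg_add]
  neg_mem' := by
    rintro F ⟨hF, hF'⟩
    refine ⟨fun l u v m ↦ ?_, fun l u v m ↦ ?_⟩
    · simp only [Pi.neg_apply, hF, neg_add]
    · rw [Pi.neg_apply, Pi.neg_apply, hF']

/-- The type of skew-symmetric multiadditive cochains on `V`. -/
abbrev SkewCochain (V : Type*) [AddCommGroup V] : Type _ := skewCochains V

namespace SkewCochain

variable {V : Type*} [AddCommGroup V]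

instance : CoeFun (SkewCochain V) fun _ ↦ List V → V := ⟨Subtype.val⟩

theorem map_append_add_cons (F : SkewCochain V) (l : List V) (u v : V) (m : List V) :
    F (l ++ (u + v) :: m) = F (l ++ u :: m) + F (l ++ v :: m) :=
  F.2.1 l u v m

theorem map_append_swap (F : SkewCochain V) (l : List V) (u v : V) (m : List V) :
    F (l ++ u :: v :: m) = -F (l ++ v :: u :: m) :=
  F.2.2 l u v m

/-- The cochain given by a skew-symmetric multilinear map, zero in all other arities. -/
def ofMultilinear {R : Type*} [Semiring R] [Module R V] {n : ℕ}
    (A : MultilinearMap R (fun _ : Fin n ↦ V) V) (hA : IsSkewSymmetric A) : SkewCochain V :=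
  ⟨fun l ↦ if h : l.length = n then A fun i ↦ l[i] else 0,
  fun l u v m ↦ by
    simp only [List.length_append, List.length_cons]
    split_ifs with h
    · have hw (w : V) : (fun i : Fin n ↦ (l ++ w :: m)[i]'(by grind)) =
          Function.update (fun i : Fin n ↦ (l ++ u :: m)[i]'(by grind)) ⟨l.length, by grind⟩ w := by
        funext i
        grind [Function.update_apply]
      rw [hw (u + v), hw v, A.map_update_add, Function.update_eq_self_iff.mpr (by simp)]
    · rw [add_zero],
  fun l u v m ↦ by
    simp only [List.length_append, List.length_cons]
    split_ifs with h
    · rw [← hA _ ⟨l.length, by grind⟩ ⟨l.length + 1, by grind⟩ (by simp)]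
      congr 1
      funext i
      simp only [Function.comp_apply, Equiv.swap_apply_def]
      grind
    · rw [neg_zero]⟩

/-- The contraction `ι_v F`, which inserts `v` as the first argument of `F`. -/
def contract : V →+ SkewCochain V →+ SkewCochain V :=
  AddMonoidHom.mk' (fun v ↦ AddMonoidHom.mk'
    (fun F ↦ ⟨fun l ↦ F (v :: l), fun l ↦ F.map_append_add_cons (v :: l),
      fun l ↦ F.map_append_swap (v :: l)⟩)
    fun _ _ ↦ rfl)
    fun u v ↦ AddMonoidHom.ext fun F ↦ Subtype.ext <| funext fun l ↦
      F.map_append_add_cons [] u v l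

theorem contract_apply (v : V) (F : SkewCochain V) (l : List V) : contract v F l = F (v :: l) :=
  rfl

theorem contract_comm (u v : V) (F : SkewCochain V) :
    contract u (contract v F) = -contract v (contract u F) :=
  Subtype.ext <| funext fun l ↦ F.map_append_swap [] v u l

theorem map_zero_cons (F : SkewCochain V) (l : List V) : F (0 :: l) = 0 := by
  rw [← contract_apply, map_zero]
  rfl

theorem map_neg_cons (F : SkewCochain V) (v : V) (l : List V) : F (-v :: l) = -F (v :: l) := by
  rw [← contract_apply, map_neg]
  rfl

/-- The parity involution `ε`, which acts as `(-1) ^ (n - 1)` on cochains of arity `n`. -/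
def involute : SkewCochain V →+ SkewCochain V :=
  AddMonoidHom.mk' (fun F ↦ ⟨fun l ↦ (-1 : ℤ) ^ (l.length + 1) • F l,
    fun l u v m ↦ by
      simp only [List.length_append, List.length_cons, map_append_add_cons, smul_add],
    fun l u v m ↦ by
      simp only [List.length_append, List.length_cons, F.map_append_swap l u v, smul_neg]⟩)
    fun _ _ ↦ Subtype.ext <| funext fun _ ↦ smul_add _ _ _

theorem involute_apply (F : SkewCochain V) (l : List V) :
    involute F l = (-1 : ℤ) ^ (l.length + 1) • F l :=
  rfl

theorem involute_nil (F : SkewCochain V) : involute F [] = -F [] := by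
  simp [involute_apply]

theorem involute_cons (F : SkewCochain V) (v : V) (l : List V) :
    involute F (v :: l) = -involute (contract v F) l := by
  rw [involute_apply, involute_apply, contract_apply, List.length_cons, pow_succ, mul_neg_one,
    neg_smul]

theorem involute_involute (F : SkewCochain V) : involute (involute F) = F := by
  ext l
  simp only [involute_apply, smul_smul, ← mul_pow, neg_mul_neg, one_mul, one_pow, one_smul]

theorem involute_contract (v : V) (F : SkewCochain V) :
    involute (contract v F) = -contract v (involute F) := by
  ext l
  exact (neg_eq_iff_eq_neg.mpr (involute_cons F v l)).symm

/-- The value of the insertion `F ∘ G` at a list of arguments. A shuffle puts the first argument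
`v` either first in `G` or first among the remaining arguments of `F`; in the latter case moving it
past `G` costs the sign `ε` of `G`. -/
def insertionEval : List V → SkewCochain V →+ SkewCochain V →+ V
  | [] => AddMonoidHom.mk' (fun F ↦ AddMonoidHom.mk' (fun G ↦ F [G []])
      fun _ _ ↦ F.map_append_add_cons [] _ _ []) fun _ _ ↦ rfl
  | v :: l => (insertionEval l).compl₂ (contract v) +
      ((insertionEval l).comp (contract v)).compl₂ involute

theorem insertionEval_cons (v : V) (l : List V) (F G : SkewCochain V) :
    insertionEval (v :: l) F G =
      insertionEval l F (contract v G) + insertionEval l (contract v F) (involute G) :=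
  rfl

theorem insertionEval_append_add_cons (l : List V) (u v : V) (m : List V) (F G : SkewCochain V) :
    insertionEval (l ++ (u + v) :: m) F G =
      insertionEval (l ++ u :: m) F G + insertionEval (l ++ v :: m) F G := by
  induction l generalizing F G with
  | nil =>
    simp only [List.nil_append, insertionEval_cons, map_add, AddMonoidHom.add_apply]
    abel
  | cons w l ih =>
    simp only [List.cons_append, insertionEval_cons, ih]
    abel

theorem insertionEval_append_swap (l : List V) (u v : V) (m : List V) (F G : SkewCochain V) :
    insertionEval (l ++ u :: v :: m) F G = -insertionEval (l ++ v :: u :: m) F G := by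
  induction l generalizing F G with
  | nil =>
    simp only [List.nil_append, insertionEval_cons, involute_involute, involute_contract,
      contract_comm u v, map_neg, AddMonoidHom.neg_apply]
    abel
  | cons w l ih =>
    simp only [List.cons_append, insertionEval_cons, ih (contract w F), ih F]
    abel

/-- The insertion product `F ∘ G` of cochains, written `F ⋄ G`. -/
def insertion : SkewCochain V →+ SkewCochain V →+ SkewCochain V :=
  AddMonoidHom.mk' (fun F ↦ AddMonoidHom.mk' (fun G ↦ ⟨fun l ↦ insertionEval l F G,
    fun l u v m ↦ insertionEval_append_add_cons l u v m F G,
    fun l u v m ↦ insertionEval_append_swap l u v m F G⟩)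
    fun G H ↦ Subtype.ext <| funext fun l ↦ map_add (insertionEval l F) G H)
    fun F G ↦ AddMonoidHom.ext fun H ↦ Subtype.ext <| funext fun l ↦
      DFunLike.congr_fun (map_add (insertionEval l) F G) H

local notation:75 F:75 " ⋄ " G:76 => insertion F G

theorem insertion_nil (F G : SkewCochain V) : (F ⋄ G) [] = F [G []] :=
  rfl

theorem contract_insertion (v : V) (F G : SkewCochain V) :
    contract v (F ⋄ G) = F ⋄ contract v G + contract v F ⋄ involute G :=
  rfl

theorem involute_insertion (F G : SkewCochain V) :
    involute (F ⋄ G) = involute F ⋄ involute G := by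
  ext l
  induction l generalizing F G with
  | nil =>
    calc involute (F ⋄ G) []
      _ = -F [G []] := by rw [involute_nil, insertion_nil]
      _ = F [involute G []] := by rw [involute_nil, map_neg_cons]
      _ = (involute F ⋄ involute G) [] := by simp [insertion_nil, involute_apply F]
  | cons v l ih =>
    calc involute (F ⋄ G) (v :: l)
      _ = -(involute (F ⋄ contract v G) l + involute (contract v F ⋄ involute G) l) := by
        rw [involute_cons, contract_insertion, map_add]
        rfl
      _ = -((involute F ⋄ involute (contract v G)) l +
          (involute (contract v F) ⋄ involute (involute G)) l) := by
        rw [ih, ih]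
      _ = contract v (involute F ⋄ involute G) l := by
        rw [involute_contract, involute_contract, contract_insertion]
        simp [add_comm]

/-- The cochains of degree `p`, that is, of arity `p + 1`; the only one with `p < -1` is zero. -/
def ofDegree (p : ℤ) : AddSubgroup (SkewCochain V) where
  carrier := {F | ∀ l : List V, (l.length : ℤ) ≠ p + 1 → F l = 0}
  zero_mem' _ _ := rfl
  add_mem' hF hG l hl := by simp [hF l hl, hG l hl]
  neg_mem' hF l hl := by simp [hF l hl]

variable {p q r : ℤ} {F G H : SkewCochain V}

theorem contract_mem_ofDegree (v : V) (hF : F ∈ ofDegree p) : contract v F ∈ ofDegree (p - 1) :=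
  fun l hl ↦ hF (v :: l) (by grind)

theorem involute_eq_negOnePow_smul (hF : F ∈ ofDegree p) :
    involute F = (p.negOnePow : ℤ) • F := by
  ext l
  rcases eq_or_ne (l.length : ℤ) (p + 1) with hl | hl
  · obtain rfl : p = l.length - 1 := by lia
    simp [involute_apply, Int.negOnePow_sub, Int.coe_negOnePow_natCast, pow_succ]
  · simp [involute_apply, hF l hl]

theorem involute_mem_ofDegree (hF : F ∈ ofDegree p) : involute F ∈ ofDegree p := by
  rw [involute_eq_negOnePow_smul hF]
  exact zsmul_mem hF _

theorem insertion_mem_ofDegree (hF : F ∈ ofDegree p) (hG : G ∈ ofDegree q) :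
    F ⋄ G ∈ ofDegree (p + q) := by
  intro l hl
  induction l generalizing F G p q with
  | nil =>
    rw [insertion_nil]
    by_cases hq : q = -1
    · exact hF _ (by grind)
    · rw [hG [] (by grind), map_zero_cons]
  | cons v l ih =>
    rw [← contract_apply, contract_insertion]
    simp [ih hF (contract_mem_ofDegree v hG) (by grind),
      ih (contract_mem_ofDegree v hF) (involute_mem_ofDegree hG) (by grind)]

/-- The associator `(F ∘ G) ∘ H - F ∘ (G ∘ H)` of the insertion product. -/
def associator (F G H : SkewCochain V) : SkewCochain V :=
  (F ⋄ G) ⋄ H - F ⋄ (G ⋄ H)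

theorem associator_nil (F G H : SkewCochain V) : associator F G H [] = F [G [], H []] := by
  calc associator F G H []
    _ = F [G [H []]] + F [H [], involute G []] - F [G [H []]] := rfl
    _ = F [H [], -G []] := by rw [add_sub_cancel_left, involute_nil]
    _ = F [G [], H []] := by
      rw [show F [H [], -G []] = -F [-G [], H []] from F.map_append_swap [] _ _ [],
        map_neg_cons, neg_neg]

theorem contract_associator (v : V) (F G H : SkewCochain V) :
    contract v (associator F G H) = associator F G (contract v H) +
      associator F (contract v G) (involute H) +
      associator (contract v F) (involute G) (involute H) := by
  simp only [associator, map_add, map_sub, contract_insertion, involute_insertion,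
    AddMonoidHom.add_apply]
  abel

theorem associator_zsmul_right (n : ℤ) (F G H : SkewCochain V) :
    associator F G (n • H) = n • associator F G H := by
  simp only [associator, map_zsmul, smul_sub]

theorem associator_zsmul_middle (n : ℤ) (F G H : SkewCochain V) :
    associator F (n • G) H = n • associator F G H := by
  simp only [associator, map_zsmul, AddMonoidHom.smul_apply, smul_sub]

/-- The insertion product is graded pre-Lie. -/
theorem associator_comm (F : SkewCochain V) (hG : G ∈ ofDegree q) (hH : H ∈ ofDegree r) :
    associator F G H = ((q * r).negOnePow : ℤ) • associator F H G := by
  ext l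
  induction l generalizing F G H q r with
  | nil =>
    simp only [AddSubgroup.coe_zsmul, Pi.smul_apply, associator_nil]
    by_cases hqr : q = -1 ∧ r = -1
    · obtain ⟨rfl, rfl⟩ := hqr
      simpa using F.map_append_swap [] (G []) (H []) []
    · have hGH : G [] = 0 ∨ H [] = 0 :=
        (not_and_or.mp hqr).imp (fun h ↦ hG [] (by grind)) fun h ↦ hH [] (by grind)
      have hF (v : V) : F [v, 0] = 0 := map_zero_cons (contract v F) []
      rcases hGH with h | h <;> simp [h, hF, map_zero_cons]
  | cons v l ih =>
    have h₁ : associator F G (contract v H) l =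
        ((q * r).negOnePow : ℤ) • associator F (contract v H) (involute G) l := by
      rw [ih F hG (contract_mem_ofDegree v hH), involute_eq_negOnePow_smul hG,
        associator_zsmul_right, mul_sub, Int.negOnePow_sub, mul_one, Units.val_mul, mul_smul]
      rfl
    have h₂ : associator F (contract v G) (involute H) l =
        ((q * r).negOnePow : ℤ) • associator F H (contract v G) l := by
      rw [ih F (contract_mem_ofDegree v hG) (involute_mem_ofDegree hH),
        involute_eq_negOnePow_smul hH, associator_zsmul_middle, smul_smul, ← Units.val_mul,
        ← Int.negOnePow_add, sub_mul, one_mul, sub_add_cancel]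
      rfl
    have h₃ : associator (contract v F) (involute G) (involute H) l =
        ((q * r).negOnePow : ℤ) • associator (contract v F) (involute H) (involute G) l :=
      ih (contract v F) (involute_mem_ofDegree hG) (involute_mem_ofDegree hH)
    calc associator F G H (v :: l)
      _ = associator F G (contract v H) l + associator F (contract v G) (involute H) l +
          associator (contract v F) (involute G) (involute H) l :=
        congrArg (fun K : SkewCochain V ↦ K l) (contract_associator v F G H)
      _ = ((q * r).negOnePow : ℤ) • (contract v (associator F H G)) l := by
        rw [h₁, h₂, h₃, contract_associator]
        simp only [AddSubgroup.coe_add, Pi.add_apply, smul_add]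
        abel

/-- The Nijenhuis bracket of cochains `F` of degree `p` and `G` of degree `q`. -/
def bracket (p q : ℤ) (F G : SkewCochain V) : SkewCochain V :=
  F ⋄ G - ((p * q).negOnePow : ℤ) • G ⋄ F

theorem bracket_mem_ofDegree (hF : F ∈ ofDegree p) (hG : G ∈ ofDegree q) :
    bracket p q F G ∈ ofDegree (p + q) :=
  sub_mem (insertion_mem_ofDegree hF hG)
    (zsmul_mem (add_comm q p ▸ insertion_mem_ofDegree hG hF) _)

theorem bracket_jacobi (hF : F ∈ ofDegree p) (hG : G ∈ ofDegree q) (hH : H ∈ ofDegree r) :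
    bracket p (q + r) F (bracket q r G H) = bracket (p + q) r (bracket p q F G) H +
      ((p * q).negOnePow : ℤ) • bracket q (p + r) G (bracket p r F H) := by
  have hF_comm := associator_comm F hG hH
  have hG_comm := associator_comm G hF hH
  have hH_comm := associator_comm H hF hG
  simp only [bracket, map_sub, map_zsmul, AddMonoidHom.sub_apply, AddMonoidHom.smul_apply,
    mul_add, add_mul, Int.negOnePow_add, mul_comm q p, associator] at hF_comm hG_comm hH_comm ⊢
  -- The Jacobi identity is a signed sum of the three pre-Lie identities, for any signs `x, y, z`.
  generalize (p * q).negOnePow = x at *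
  generalize (p * r).negOnePow = y at *
  generalize (q * r).negOnePow = z at *
  linear_combination (norm := skip) -(1 : ℤ) • hF_comm + (x : ℤ) • hG_comm - (y * z : ℤ) • hH_comm
  rcases Int.units_eq_one_or x with rfl | rfl <;> rcases Int.units_eq_one_or y with rfl | rfl <;>
    rcases Int.units_eq_one_or z with rfl | rfl <;>
      simp only [Units.val_mul, Units.val_one, Units.val_neg] <;> module

/-! ### The Nijenhuis bracket of multilinear maps as a bracket of cochains -/

theorem shuffleSum_insertIdx {n b : ℕ} (F G : SkewCochain V) (hb : b ≤ n) (v : V)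
    (x : Fin n → V) :
    shuffleSum b (fun l ↦ F (G ((l.insertIdx b v).take b) :: (l.insertIdx b v).drop b)) x =
      -shuffleSum b (fun l ↦ contract v F (G (l.take b) :: l.drop b)) x := by
  rw [← shuffleSum_neg]
  refine shuffleSum_congr (fun l hl ↦ ?_) x
  have hdrop : (l.insertIdx b v).drop b = v :: l.drop b :=
    List.ext_getElem (by grind) (by grind)
  rw [List.take_insertIdx_eq_take_of_le _ _ _ _ le_rfl, hdrop]
  exact F.map_append_swap [] _ _ _

theorem shuffleSum_eq_insertion {n b : ℕ} (F : SkewCochain V) (hG : G ∈ ofDegree (b - 1))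
    (x : Fin n → V) :
    shuffleSum b (fun l ↦ F (G (l.take b) :: l.drop b)) x = (F ⋄ G) (List.ofFn x) := by
  induction n generalizing b F G with
  | zero =>
    rw [shuffleSum, Finset.filter_true_of_mem fun σ _ ↦ ⟨fun i ↦ i.elim0, fun i ↦ i.elim0⟩]
    simp [insertion_nil]
  | succ n ih =>
    have hfirst : (if b = 0 then 0 else shuffleSum (b - 1)
        (fun l ↦ F (G ((x 0 :: l).take b) :: (x 0 :: l).drop b)) (Fin.tail x)) =
        (F ⋄ contract (x 0) G) (List.ofFn (Fin.tail x)) := by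
      have hcontract := contract_mem_ofDegree (x 0) hG
      cases b with
      | zero =>
        have hzero : contract (x 0) G = 0 := Subtype.ext <| funext fun l ↦ hcontract l (by lia)
        simp [hzero]
      | succ b => exact ih F (by simpa using hcontract) (Fin.tail x)
    have hsecond : (if b ≤ n then (-1 : ℤ) ^ b • shuffleSum b (fun l ↦
        F (G ((l.insertIdx b (x 0)).take b) :: (l.insertIdx b (x 0)).drop b)) (Fin.tail x)
        else 0) = (contract (x 0) F ⋄ involute G) (List.ofFn (Fin.tail x)) := by
      rw [involute_eq_negOnePow_smul hG, map_zsmul, AddSubgroup.coe_zsmul, Pi.smul_apply,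
        ← ih (contract (x 0) F) hG]
      split_ifs with hb
      · rw [shuffleSum_insertIdx F G hb, Int.negOnePow_sub]
        simp [Int.coe_negOnePow_natCast]
      · have hshort (l : List V) (hl : l.length = n) :
            contract (x 0) F (G (l.take b) :: l.drop b) = 0 := by
          rw [hG _ (by grind), map_zero_cons]
        rw [shuffleSum_congr hshort]
        simp [shuffleSum]
    rw [shuffleSum_succ, hfirst, hsecond, List.ofFn_succ]
    rfl

theorem ins_eq_insertion {a b : ℕ} {f g : (ℕ → V) → V} (hF : F ∈ ofDegree (a - 1))
    (hG : G ∈ ofDegree (b - 1)) (hf : ∀ x, f x = F (List.ofFn fun i : Fin a ↦ x i))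
    (hg : ∀ x, g x = G (List.ofFn fun i : Fin b ↦ x i)) (x : ℕ → V) :
    ins a b f g x = (F ⋄ G) (List.ofFn fun i : Fin (a + b - 1) ↦ x i) := by
  rw [← shuffleSum_eq_insertion F hG, ins]
  rcases a with _ | a
  · have hzero (v : V) (l : List V) : F (v :: l) = 0 := hF _ (by grind)
    simp [hzero, shuffleSum]
  rw [dif_neg a.succ_ne_zero]
  refine Finset.sum_congr rfl fun σ _ ↦ ?_
  rw [hf, List.ofFn_succ, Fin.val_zero, if_pos rfl, hg]
  refine congrArg (fun l ↦ (Equiv.Perm.sign σ : ℤ) • F l) (congrArg₂ _ (congrArg G.1 ?_) ?_)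
  · refine List.ext_getElem (by simp) fun i _ _ ↦ ?_
    simp
  · refine List.ext_getElem (by simp) fun i hi _ ↦ ?_
    have hlt : b + i < a + b := by grind
    simp [hlt, ← add_assoc]

/-- The cochain `F` of degree `p` represents the `n`-ary operation `f`. Here `n = p + 1` unless
`F = 0`; the exception absorbs the truncation of `a + b - 1` when `a = b = 0`. -/
structure Represents (F : SkewCochain V) (p : ℤ) (n : ℕ) (f : (ℕ → V) → V) : Prop where
  mem_ofDegree : F ∈ ofDegree p
  eq_or_eq_zero : p = n - 1 ∨ F = 0
  apply_eq : ∀ x, f x = F (List.ofFn fun i : Fin n ↦ x i)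

namespace Represents

variable {a b n : ℕ} {f g : (ℕ → V) → V}

theorem mem_ofDegree_arity (hf : Represents F p n f) : F ∈ ofDegree (n - 1) := by
  obtain rfl | rfl := hf.eq_or_eq_zero
  · exact hf.mem_ofDegree
  · exact zero_mem _

theorem ins_apply (hf : Represents F p a f) (hg : Represents G q b g) (x : ℕ → V) :
    ins a b f g x = (F ⋄ G) (List.ofFn fun i : Fin (a + b - 1) ↦ x i) :=
  ins_eq_insertion hf.mem_ofDegree_arity hg.mem_ofDegree_arity hf.apply_eq hg.apply_eq x

theorem nij (hf : Represents F p a f) (hg : Represents G q b g) :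
    Represents (bracket p q F G) (p + q) (a + b - 1) (nij a b f g) where
  mem_ofDegree := bracket_mem_ofDegree hf.mem_ofDegree hg.mem_ofDegree
  eq_or_eq_zero := by
    obtain rfl | rfl := hf.eq_or_eq_zero
    · obtain rfl | rfl := hg.eq_or_eq_zero
      · rcases Nat.eq_zero_or_pos (a + b) with h | h
        · refine .inr <| Subtype.ext <| funext fun l ↦
            bracket_mem_ofDegree hf.mem_ofDegree hg.mem_ofDegree l (by lia)
        · exact .inl (by lia)
      · simp [bracket]
    · simp [bracket]
  apply_eq x := by
    have hsign : ((p * q).negOnePow : ℤ) • G ⋄ F =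
        (Int.negOnePow (((a : ℤ) - 1) * ((b : ℤ) - 1)) : ℤ) • G ⋄ F := by
      obtain rfl | rfl := hf.eq_or_eq_zero
      · obtain rfl | rfl := hg.eq_or_eq_zero
        · rfl
        · simp
      · simp
    rw [_root_.nij, hf.ins_apply hg, hg.ins_apply hf, bracket, hsign, add_comm b a]
    rfl

theorem apply_eq_of_eq_toNat {m : ℕ} (hf : Represents F p n f) (hm : m = (p + 1).toNat)
    (x : ℕ → V) : f x = F (List.ofFn fun i : Fin m ↦ x i) := by
  subst hm
  rw [hf.apply_eq]
  obtain rfl | rfl := hf.eq_or_eq_zero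
  · simp
  · rfl

end Represents

theorem represents_ofMultilinear {R : Type*} [Semiring R] [Module R V] {n : ℕ}
    (A : MultilinearMap R (fun _ : Fin n ↦ V) V) (hA : IsSkewSymmetric A) :
    Represents (ofMultilinear A hA) (n - 1) n (ext A) where
  mem_ofDegree l hl := dif_neg (by lia)
  eq_or_eq_zero := .inl rfl
  apply_eq x := by simp [ext, ofMultilinear]

end SkewCochain

open SkewCochain in
theorem nij_graded_jacobi_general {R V : Type*} [Semiring R] [AddCommGroup V] [Module R V]
    (a b c : ℕ) (A : MultilinearMap R (fun _ : Fin a ↦ V) V)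
    (B : MultilinearMap R (fun _ : Fin b ↦ V) V) (C : MultilinearMap R (fun _ : Fin c ↦ V) V)
    (hA : IsSkewSymmetric A) (hB : IsSkewSymmetric B) (hC : IsSkewSymmetric C) :
    nij a (b + c - 1) (ext ⇑A) (nij b c (ext ⇑B) (ext ⇑C)) = fun x =>
      nij (a + b - 1) c (nij a b (ext ⇑A) (ext ⇑B)) (ext ⇑C) x
      + (Int.negOnePow (((a : ℤ) - 1) * ((b : ℤ) - 1)) : ℤ) •
          nij b (a + c - 1) (ext ⇑B) (nij a c (ext ⇑A) (ext ⇑C)) x := by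
  have rA := represents_ofMultilinear A hA
  have rB := represents_ofMultilinear B hB
  have rC := represents_ofMultilinear C hC
  funext x
  have hABC := (rA.nij (rB.nij rC)).apply_eq_of_eq_toNat (m := a + b + c - 2) (by lia) x
  have hAB_C := ((rA.nij rB).nij rC).apply_eq_of_eq_toNat (m := a + b + c - 2) (by lia) x
  have hBAC := (rB.nij (rA.nij rC)).apply_eq_of_eq_toNat (m := a + b + c - 2) (by lia) x
  rw [hABC, hAB_C, hBAC, bracket_jacobi rA.mem_ofDegree rB.mem_ofDegree rC.mem_ofDegree]
  rfl

/-- the Nijenhuis bracket satisfies the graded Jacobi identity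
`[A,[B,C]] = [[A,B],C] + (−1)^{(a−1)(b−1)} [B,[A,C]]` for `A ∈ C^a(V)`, `B ∈ C^b(V)`,
`C ∈ C^c(V)`; hence `⊕_n C^n(V)`, with `C^a(V)` in degree `a−1`, is a graded Lie
superalgebra under the Nijenhuis bracket. -/
theorem nij_graded_jacobi
    {R : Type*} [CommRing R] {V : Type*} [AddCommGroup V] [Module R V]
    (a b c : ℕ)
    (A : AlternatingMap R V V (Fin a)) (B : AlternatingMap R V V (Fin b))
    (C : AlternatingMap R V V (Fin c)) :
    nij a (b + c - 1) (ext ⇑A) (nij b c (ext ⇑B) (ext ⇑C)) = fun x =>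
      nij (a + b - 1) c (nij a b (ext ⇑A) (ext ⇑B)) (ext ⇑C) x
      + (Int.negOnePow (((a : ℤ) - 1) * ((b : ℤ) - 1)) : ℤ) •
          nij b (a + c - 1) (ext ⇑B) (nij a c (ext ⇑A) (ext ⇑C)) x :=
  nij_graded_jacobi_general a b c A.toMultilinearMap B.toMultilinearMap C.toMultilinearMap
    (fun x _ _ h ↦ A.map_swap x h) (fun x _ _ h ↦ B.map_swap x h) fun x _ _ h ↦ C.map_swap x h
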